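/- For naturals n > k+1, the double p-adic q-integral of B_{k,n}(x1,x2|q) over Z_p x Z_p equals C(n,k) * beta_{k,q} * (q^2 beta_{n-k,q^{-1}} + (n-k+1) - q). -/

import Mathlib

/-- The q-number [m]_q = (1 - q^m)/(1 - q) for q in the p-adic numbers and integer m. -/
noncomputable def qNumZ (p : ℕ) [Fact p.Prime] (q : ℚ_[p]) (m : ℤ) : ℚ_[p] :=
  (1 - q ^ m) / (1 - q)

/-- `IsPadicQIntegral p q f I` says the bosonic p-adic q-integral
`I_q(f) = lim_N (1/[p^N]_q) ∑_{x=0}^{p^N-1} f(x) q^x` exists and equals `I`. -/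
def IsPadicQIntegral (p : ℕ) [Fact p.Prime] (q : ℚ_[p]) (f : ℕ → ℚ_[p]) (I : ℚ_[p]) : Prop :=
  Filter.Tendsto
    (fun N : ℕ => (∑ x ∈ Finset.range (p ^ N), f x * q ^ x) / qNumZ p q ((p : ℤ) ^ N))
    Filter.atTop (nhds I)

/-- The double bosonic p-adic q-integral over ℤ_p × ℤ_p. -/
def IsPadicQIntegral2 (p : ℕ) [Fact p.Prime] (q : ℚ_[p]) (f : ℕ → ℕ → ℚ_[p]) (I : ℚ_[p]) : Prop :=
  Filter.Tendsto
    (fun N : ℕ =>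
      (∑ x1 ∈ Finset.range (p ^ N), ∑ x2 ∈ Finset.range (p ^ N),
        f x1 x2 * q ^ x1 * q ^ x2) / (qNumZ p q ((p : ℤ) ^ N)) ^ 2)
    Filter.atTop (nhds I)

open Filter Topology in
theorem aux_tendsto_pow (p : ℕ) [Fact p.Prime] (q : ℚ_[p]) (hq : ‖1 - q‖ < 1) :
    Tendsto (fun N : ℕ => q ^ (p ^ N)) atTop (𝓝 1) := by
  have hq1 : ‖q‖ ≤ 1 := by
    have h : q = 1 + -(1 - q) := by ring
    rw [h]
    refine (Padic.nonarchimedean _ _).trans ?_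
    rw [norm_neg, norm_one]
    exact max_le le_rfl hq.le
  set z : ℤ_[p] := ⟨q, hq1⟩ with hz
  have hd : (p : ℤ_[p]) ∣ z - 1 := by
    rw [← PadicInt.norm_lt_one_iff_dvd, ← norm_neg, neg_sub]
    exact hq
  have hb : ∀ N : ℕ, ‖q ^ (p ^ N) - 1‖ ≤ ((p : ℝ)⁻¹) ^ N := by
    intro N
    have h1 : (p : ℤ_[p]) ^ (N + 1) ∣ z ^ (p ^ N) - 1 := by
      simpa using dvd_sub_pow_of_dvd_sub (p := p) hd N
    have h2 : (p : ℤ_[p]) ^ N ∣ z ^ (p ^ N) - 1 := (pow_dvd_pow _ (Nat.le_succ N)).trans h1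
    obtain ⟨w, hw⟩ := h2
    have h3 : ‖z ^ (p ^ N) - 1‖ ≤ ((p : ℝ)⁻¹) ^ N := by
      rw [hw, norm_mul, norm_pow, PadicInt.norm_p]
      exact mul_le_of_le_one_right (by positivity) (PadicInt.norm_le_one w)
    have h4 : ((z ^ (p ^ N) - 1 : ℤ_[p]) : ℚ_[p]) = q ^ (p ^ N) - 1 := by
      push_cast
      rfl
    rw [← h4]
    exact h3
  rw [tendsto_iff_norm_sub_tendsto_zero]
  refine squeeze_zero (fun _ => norm_nonneg _) hb ?_
  apply tendsto_pow_atTop_nhds_zero_of_lt_one (by positivity)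
  apply inv_lt_one_of_one_lt₀
  exact_mod_cast (Fact.out : p.Prime).one_lt

/-- `q` has no nontrivial power equal to one, unless a `p`-power does. -/
theorem aux_ne_one (p : ℕ) [Fact p.Prime] (q : ℚ_[p]) (hq : ‖1 - q‖ < 1)
    (hN : ∀ N : ℕ, q ^ (p ^ N) ≠ 1) (a : ℕ) (ha : a ≠ 0) : q ^ a ≠ 1 := by
  intro h
  have ht := aux_tendsto_pow p q hq
  have hq1 : q ≠ 1 := by simpa using hN 0
  -- geometric sums along `u = q ^ (p ^ N)` vanish but tend to `a`
  have hz : ∀ N : ℕ, ∑ i ∈ Finset.range a, (q ^ (p ^ N)) ^ i = 0 := by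
    intro N
    rw [geom_sum_eq (hN N), ← pow_mul, mul_comm, pow_mul, h]
    simp
  have hl : Filter.Tendsto (fun N : ℕ => ∑ i ∈ Finset.range a, (q ^ (p ^ N)) ^ i)
      Filter.atTop (nhds (∑ i ∈ Finset.range a, (1 : ℚ_[p]) ^ i)) :=
    tendsto_finsetSum _ (fun i _ => ht.pow i)
  simp only [hz] at hl
  have := tendsto_nhds_unique hl tendsto_const_nhds
  simp at this
  exact ha this

theorem aux_ratio (p : ℕ) [Fact p.Prime] (q : ℚ_[p]) (hq : ‖1 - q‖ < 1)
    (hN : ∀ N : ℕ, q ^ (p ^ N) ≠ 1) (a : ℕ) (ha : a ≠ 0) :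
    Filter.Tendsto
      (fun N : ℕ => (∑ x ∈ Finset.range (p ^ N), (q ^ a) ^ x) / qNumZ p q ((p : ℤ) ^ N))
      Filter.atTop (nhds ((a : ℚ_[p]) * ((1 - q) / (1 - q ^ a)))) := by
  have ht := aux_tendsto_pow p q hq
  have hq1 : q ≠ 1 := by simpa using hN 0
  have hqa := aux_ne_one p q hq hN a ha
  have hl : Filter.Tendsto (fun N : ℕ => ∑ i ∈ Finset.range a, (q ^ (p ^ N)) ^ i)
      Filter.atTop (nhds (∑ i ∈ Finset.range a, (1 : ℚ_[p]) ^ i)) :=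
    tendsto_finsetSum _ (fun i _ => ht.pow i)
  have hl2 := hl.mul_const ((1 - q) / (1 - q ^ a))
  simp only [one_pow, Finset.sum_const, Finset.card_range, nsmul_eq_mul, mul_one] at hl2
  refine hl2.congr ?_
  intro N
  have e : q ^ ((p : ℤ) ^ N) = q ^ (p ^ N) := by
    rw [← zpow_natCast q (p ^ N)]
    push_cast
    rfl
  rw [geom_sum_eq (hN N), geom_sum_eq hqa, qNumZ, e, ← pow_mul, ← pow_mul, mul_comm (p ^ N) a]
  have h1 : q ^ (p ^ N) - 1 ≠ 0 := sub_ne_zero.2 (hN N)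
  have h2 : q ^ a - 1 ≠ 0 := sub_ne_zero.2 hqa
  have h3 : 1 - q ≠ 0 := sub_ne_zero.2 hq1.symm
  have h4 : 1 - q ^ (p ^ N) ≠ 0 := sub_ne_zero.2 (hN N).symm
  have h5 : 1 - q ^ a ≠ 0 := sub_ne_zero.2 hqa.symm
  rw [← neg_sub 1 (q ^ a), ← neg_sub 1 (q ^ (p ^ N))]
  field_simp

theorem aux_moment (p : ℕ) [Fact p.Prime] (q : ℚ_[p]) (hq : ‖1 - q‖ < 1)
    (hN : ∀ N : ℕ, q ^ (p ^ N) ≠ 1) (c d : ℚ_[p]) (m : ℕ) :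
    IsPadicQIntegral p q (fun x : ℕ => ((1 - c * q ^ x) / d) ^ m)
      ((∑ j ∈ Finset.range (m + 1), (m.choose j : ℚ_[p]) * (-c) ^ j *
        (((j + 1 : ℕ) : ℚ_[p]) * ((1 - q) / (1 - q ^ (j + 1))))) / d ^ m) := by
  have hl := (tendsto_finsetSum (Finset.range (m + 1)) (fun j _ =>
    (aux_ratio p q hq hN (j + 1) (Nat.succ_ne_zero j)).const_mul
      ((m.choose j : ℚ_[p]) * (-c) ^ j))).div_const (d ^ m)
  unfold IsPadicQIntegral
  refine hl.congr ?_
  intro N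
  simp only [mul_div_assoc']
  rw [← Finset.sum_div, div_right_comm]
  congr 1
  simp only [Finset.mul_sum]
  rw [Finset.sum_comm, Finset.sum_div]
  refine Finset.sum_congr rfl fun x _ => ?_
  rw [div_pow, div_mul_eq_mul_div, sub_eq_neg_add, add_pow, Finset.sum_mul]
  congr 1
  refine Finset.sum_congr rfl fun j _ => ?_
  rw [← neg_mul, mul_pow, one_pow, ← pow_mul, ← pow_mul]
  ring

theorem aux_sum {F : Type*} [Field F] (t : F) (m : ℕ) :
    ∑ j ∈ Finset.range (m + 2), ((m + 1).choose j : F) * (-t) ^ j * ((j + 1 : ℕ) : F)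
      = (1 - t) ^ (m + 1) - (m + 1) * t * (1 - t) ^ m := by
  have h1 : (1 - t) ^ (m + 1) =
      ∑ j ∈ Finset.range (m + 2), ((m + 1).choose j : F) * (-t) ^ j := by
    rw [sub_eq_neg_add, add_pow]
    exact Finset.sum_congr rfl fun j _ => by rw [one_pow]; ring
  have h2 : (1 - t) ^ m = ∑ j ∈ Finset.range (m + 1), (m.choose j : F) * (-t) ^ j := by
    rw [sub_eq_neg_add, add_pow]
    exact Finset.sum_congr rfl fun j _ => by rw [one_pow]; ring
  have h3 : ∑ j ∈ Finset.range (m + 2), ((m + 1).choose j : F) * (-t) ^ j * (j : F)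
      = - ((m + 1) * t * (1 - t) ^ m) := by
    rw [Finset.sum_range_succ', h2, Finset.mul_sum, ← Finset.sum_neg_distrib]
    simp only [Nat.cast_zero, mul_zero, add_zero]
    refine Finset.sum_congr rfl fun j _ => ?_
    have h : ((m : F) + 1) * (m.choose j : F) = ((m + 1).choose (j + 1) : F) * ((j : F) + 1) := by
      exact_mod_cast congrArg (Nat.cast (R := F)) (Nat.add_one_mul_choose_eq m j)
    push_cast
    linear_combination (-t) ^ (j + 1) * (-h)
  have h4 : ∀ j : ℕ, ((m + 1).choose j : F) * (-t) ^ j * ((j + 1 : ℕ) : F)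
      = ((m + 1).choose j : F) * (-t) ^ j + ((m + 1).choose j : F) * (-t) ^ j * (j : F) := by
    intro j
    push_cast
    ring
  simp only [h4]
  rw [Finset.sum_add_distrib, h3, ← h1]
  ring

theorem aux_alg {F : Type*} [Field F] (q : F) (hq0 : q ≠ 0)
    (hq : ∀ a : ℕ, a ≠ 0 → q ^ a ≠ 1) (m : ℕ) :
    (∑ j ∈ Finset.range (m + 2 + 1), ((m + 2).choose j : F) * (-q⁻¹) ^ j *
        (((j + 1 : ℕ) : F) * ((1 - q) / (1 - q ^ (j + 1))))) / (1 - q⁻¹) ^ (m + 2)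
    = q ^ 2 * ((∑ j ∈ Finset.range (m + 2 + 1), ((m + 2).choose j : F) * (-1) ^ j *
        (((j + 1 : ℕ) : F) * ((1 - q⁻¹) / (1 - q⁻¹ ^ (j + 1))))) / (1 - q⁻¹) ^ (m + 2))
      + (((m + 2 : ℕ) : F) + 1) - q := by
  have hq1 : q ≠ 1 := by simpa using hq 1 one_ne_zero
  have hd : (1 - q⁻¹) ≠ 0 := by
    rw [sub_ne_zero]
    intro h
    exact hq1 (inv_eq_one.1 h.symm)
  have hdm : (1 - q⁻¹) ^ (m + 2) ≠ 0 := pow_ne_zero _ hd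
  have s1 := aux_sum (q⁻¹) (m + 1)
  have s2 := aux_sum (1 : F) (m + 1)
  rw [sub_self, zero_pow (by omega), zero_pow (by omega)] at s2
  have key : (∑ j ∈ Finset.range (m + 2 + 1), ((m + 2).choose j : F) * (-q⁻¹) ^ j *
        (((j + 1 : ℕ) : F) * ((1 - q) / (1 - q ^ (j + 1)))))
      = q ^ 2 * (∑ j ∈ Finset.range (m + 2 + 1), ((m + 2).choose j : F) * (-1) ^ j *
        (((j + 1 : ℕ) : F) * ((1 - q⁻¹) / (1 - q⁻¹ ^ (j + 1)))))
      + ((1 - q) * (∑ j ∈ Finset.range (m + 1 + 2), ((m + 1 + 1).choose j : F) * (-q⁻¹) ^ j *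
          ((j + 1 : ℕ) : F))
        + (1 - q) * q * (∑ j ∈ Finset.range (m + 1 + 2), ((m + 1 + 1).choose j : F) * (-1) ^ j *
          ((j + 1 : ℕ) : F))) := by
    simp only [Finset.mul_sum]
    rw [← Finset.sum_add_distrib, ← Finset.sum_add_distrib]
    refine Finset.sum_congr rfl fun j _ => ?_
    have ha : 1 - q ^ (j + 1) ≠ 0 := sub_ne_zero.2 (hq (j + 1) (Nat.succ_ne_zero j)).symm
    have hQ : (1 - q⁻¹) / (1 - q⁻¹ ^ (j + 1)) = q ^ j * ((1 - q) / (1 - q ^ (j + 1))) := by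
      have hb : 1 - q⁻¹ ^ (j + 1) = -(1 - q ^ (j + 1)) / q ^ (j + 1) := by
        rw [inv_pow]
        field_simp
        ring
      have hc : 1 - q⁻¹ = -(1 - q) / q := by
        field_simp
        ring
      rw [hb, hc]
      field_simp
      ring
    have hE : (q⁻¹) ^ j * ((1 - q) / (1 - q ^ (j + 1)))
        = q ^ 2 * (q ^ j * ((1 - q) / (1 - q ^ (j + 1)))) + ((1 - q) * (q⁻¹) ^ j + (1 - q) * q) := by
      rw [inv_pow]
      field_simp
      ring
    rw [hQ, neg_pow (q⁻¹)]
    linear_combination ((m + 2).choose j : F) * (-1) ^ j * ((j + 1 : ℕ) : F) * hE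
  rw [key, s1, s2]
  have hr : (1 - q) * q⁻¹ = -(1 - q⁻¹) := by
    field_simp
    ring
  have e : (1 - q) * ((1 - q⁻¹) ^ (m + 1 + 1) - (((m : F) + 1) + 1) * q⁻¹ * (1 - q⁻¹) ^ (m + 1))
     = (1 - q⁻¹) ^ (m + 2) * ((m : F) + 2 + 1 - q) := by
    linear_combination (-(((m : F) + 1) + 1) * (1 - q⁻¹) ^ (m + 1)) * hr
  rw [add_div, mul_div_assoc, add_sub_assoc]
  congr 1
  rw [div_eq_iff hdm]
  push_cast
  linear_combination e

theorem qBernstein_double_integral (p : ℕ) [Fact p.Prime] (q : ℚ_[p])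
    (hq : ‖1 - q‖ < 1) (n k : ℕ) (hnk : k + 1 < n) (D Bk Bnk : ℚ_[p])
    (hD : IsPadicQIntegral2 p q
      (fun x1 x2 : ℕ =>
        (n.choose k : ℚ_[p]) * (qNumZ p q (x1 : ℤ)) ^ k * (qNumZ p q⁻¹ (1 - x2)) ^ (n - k)) D)
    (hBk : IsPadicQIntegral p q (fun x : ℕ => (qNumZ p q (x : ℤ)) ^ k) Bk)
    (hBnk : IsPadicQIntegral p q⁻¹ (fun x : ℕ => (qNumZ p q⁻¹ (x : ℤ)) ^ (n - k)) Bnk) :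
    D = (n.choose k : ℚ_[p]) * Bk * (q ^ 2 * Bnk + ((n - k : ℕ) + 1 : ℚ_[p]) - q) := by
  have e : ∀ N : ℕ, q ^ ((p : ℤ) ^ N) = q ^ (p ^ N) := by
    intro N
    rw [← zpow_natCast q (p ^ N)]
    push_cast
    rfl
  by_cases hN : ∀ N : ℕ, q ^ (p ^ N) ≠ 1
  · have hq0 : q ≠ 0 := by
      rintro rfl
      simp at hq
    have hqn : ‖q‖ = 1 := by
      have h : q = 1 + -(1 - q) := by ring
      rw [h, Padic.add_eq_max_of_ne]
      · rw [norm_neg, norm_one]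
        exact max_eq_left hq.le
      · rw [norm_neg, norm_one]
        exact hq.ne'
    have hq' : ‖1 - q⁻¹‖ < 1 := by
      have h : 1 - q⁻¹ = -(1 - q) * q⁻¹ := by
        field_simp
        ring
      rw [h, norm_mul, norm_neg, norm_inv, hqn]
      simpa using hq
    have hN' : ∀ N : ℕ, q⁻¹ ^ (p ^ N) ≠ 1 := by
      intro N h
      rw [inv_pow, inv_eq_one] at h
      exact hN N h
    have hqa := aux_ne_one p q hq hN
    obtain ⟨m, hm⟩ : ∃ m, n - k = m + 2 := ⟨n - k - 2, by omega⟩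
    rw [hm] at hD hBnk ⊢
    have m1 := aux_moment p q hq hN q⁻¹ (1 - q⁻¹) (m + 2)
    have m2 := aux_moment p q⁻¹ hq' hN' 1 (1 - q⁻¹) (m + 2)
    rw [aux_alg q hq0 hqa m] at m1
    have f2 : (fun x : ℕ => (qNumZ p q⁻¹ (x : ℤ)) ^ (m + 2))
        = (fun x : ℕ => ((1 - 1 * q⁻¹ ^ x) / (1 - q⁻¹)) ^ (m + 2)) := by
      funext x
      rw [qNumZ, zpow_natCast, one_mul]
    rw [f2] at hBnk
    have hB := tendsto_nhds_unique hBnk m2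
    rw [← hB] at m1
    have hP := (hBk.mul m1).const_mul (n.choose k : ℚ_[p])
    rw [mul_assoc]
    refine tendsto_nhds_unique hD (hP.congr ?_)
    intro N
    rw [div_mul_div_comm, ← sq, mul_div_assoc', Finset.sum_mul_sum, Finset.mul_sum]
    congr 1
    refine Finset.sum_congr rfl fun x _ => ?_
    rw [Finset.mul_sum]
    refine Finset.sum_congr rfl fun y _ => ?_
    have hy : qNumZ p q⁻¹ (1 - (y : ℤ)) = (1 - q⁻¹ * q ^ y) / (1 - q⁻¹) := by
      rw [qNumZ, zpow_sub₀ (inv_ne_zero hq0), zpow_one, zpow_natCast, inv_pow, div_inv_eq_mul]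
    beta_reduce
    rw [hy]
    ring
  · push Not at hN
    obtain ⟨M, hM⟩ := hN
    have hz : ∀ N : ℕ, M ≤ N → qNumZ p q ((p : ℤ) ^ N) = 0 := by
      intro N hMN
      obtain ⟨r, rfl⟩ := Nat.exists_eq_add_of_le hMN
      rw [qNumZ, e, pow_add, pow_mul, hM]
      simp
    have hB0 : Bk = 0 := by
      refine tendsto_nhds_unique hBk (tendsto_const_nhds.congr' ?_)
      filter_upwards [Filter.eventually_ge_atTop M] with N hMN
      rw [hz N hMN, div_zero]
    have hD0 : D = 0 := by
      refine tendsto_nhds_unique hD (tendsto_const_nhds.congr' ?_)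
      filter_upwards [Filter.eventually_ge_atTop M] with N hMN
      rw [hz N hMN]
      simp
    rw [hB0, hD0]
    simp
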